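/- Let s_1, s_2, s_3 be positive integers, set s = s_1+s_2+s_3, and let x ≥ 2 be a real number. Then x^s + (−1)^(s_1+s_2+1)·x^(s_3) + (−1)^(s_1+s_3+1)·x^(s_2) + (−1)^(s_2+s_3+1)·x^(s_1) + 2·(−1)^s ≤ x^s·(1 + 2/x^2). -/

import Mathlib

/-!
Write `A, B, C` for `x ^ s₁, x ^ s₂, x ^ s₃`; all are at least `x`. The exponents
`s₁, s₂, s₃` cannot be pairwise of opposite parity, so one of the three middle terms,
say the one in `C`, is `-C`. As `C ≥ x ≥ 2`, it absorbs the constant `± 2`. The other two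
contribute at most `A + B`, and `A ≤ A * B * C / x ^ 2`, `B ≤ A * B * C / x ^ 2` because
any two of `A, B, C` have product at least `x ^ 2` (`le_mul_mul_div_sq`).
-/

theorem le_mul_mul_div_sq {x A B C : ℝ} (hx : 2 ≤ x) (hA : x ≤ A) (hB : x ≤ B)
    (hC : x ≤ C) : A ≤ A * B * C / x ^ 2 := by
  have h : x * x ≤ B * C := mul_le_mul hB hC (by linarith) (by linarith)
  rw [le_div_iff₀ (by positivity)]
  nlinarith [mul_le_mul_of_nonneg_left h (show (0 : ℝ) ≤ A by linarith)]


/-- **Lemma 4.5** (numerical core).  Let `s₁, s₂, s₃` be positive integers,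
`s = s₁+s₂+s₃`, and let `x ≥ 2` be real.  Then
`x^s + (-1)^(s₁+s₂+1)·x^(s₃) + (-1)^(s₁+s₃+1)·x^(s₂) + (-1)^(s₂+s₃+1)·x^(s₁) + 2·(-1)^s
  ≤ x^s · (1 + 2/x^2)`. -/
theorem statement_9 (s₁ s₂ s₃ : ℕ) (h₁ : 1 ≤ s₁) (h₂ : 1 ≤ s₂) (h₃ : 1 ≤ s₃)
    (s : ℕ) (hs : s = s₁ + s₂ + s₃) (x : ℝ) (hx : 2 ≤ x) :
    x ^ s + (-1 : ℝ) ^ (s₁ + s₂ + 1) * x ^ s₃ + (-1 : ℝ) ^ (s₁ + s₃ + 1) * x ^ s₂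
      + (-1 : ℝ) ^ (s₂ + s₃ + 1) * x ^ s₁ + 2 * (-1 : ℝ) ^ s
    ≤ x ^ s * (1 + 2/x^2) := by
  subst hs
  have hpow : ∀ n : ℕ, 1 ≤ n → x ≤ x ^ n := fun n hn =>
    le_self_pow₀ (by linarith) (by omega)
  have hA := hpow s₁ h₁
  have hB := hpow s₂ h₂
  have hC := hpow s₃ h₃
  have kA := le_mul_mul_div_sq hx hA hB hC
  have kB := le_mul_mul_div_sq hx hB hA hC
  have kC := le_mul_mul_div_sq hx hC hA hB
  have hR : x ^ (s₁ + s₂ + s₃) * (1 + 2 / x ^ 2)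
      = x ^ (s₁ + s₂ + s₃) + 2 * (x ^ s₁ * x ^ s₂ * x ^ s₃ / x ^ 2) := by
    rw [pow_add, pow_add]; ring
  rw [mul_comm (x ^ s₂) (x ^ s₁)] at kB
  rw [show x ^ s₃ * x ^ s₁ * x ^ s₂ = x ^ s₁ * x ^ s₂ * x ^ s₃ by ring] at kC
  rw [hR]
  simp only [pow_add (-1 : ℝ), pow_one]
  -- Eight parity patterns; each leaves a linear inequality in the three powers.
  rcases neg_one_pow_eq_or ℝ s₁ with e₁ | e₁ <;>
  rcases neg_one_pow_eq_or ℝ s₂ with e₂ | e₂ <;>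
  rcases neg_one_pow_eq_or ℝ s₃ with e₃ | e₃ <;>
  rw [e₁, e₂, e₃] <;> linarith
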